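/- arXiv:1707.05391 — 2 statements merged into one kernel-verified Lean document; each statement's English description precedes it below -/
import Mathlib

section
/- For β > 0 and n ≥ 0, the Chebyshev truncation error of e^{−β(x+1)} satisfies max_{x∈[−1,1]} |p_n(x) − e^{−β(x+1)}| = 2 e^{−β} Σ_{j=n+1}^∞ I_j(β), where p_n(x) = e^{−β}(I_0(β) + 2 Σ_{j=1}^n I_j(β) T_j(−x)); in particular the maximum is attained at x = −1. -/
open MeasureTheory

/-- The modified Bessel function of the first kind,
`I_j(β) = (1/π) ∫_0^π e^{β cos θ} cos(jθ) dθ`. -/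
noncomputable def besselI (j : ℕ) (β : ℝ) : ℝ :=
  (1 / Real.pi) * ∫ θ in (0:ℝ)..Real.pi, Real.exp (β * Real.cos θ) * Real.cos (j * θ)

/-- Degree-`n` Chebyshev truncation of `e^{−β(x+1)}`:
`p_n(x) = e^{−β}(I_0(β) + 2 Σ_{j=1}^n I_j(β) T_j(−x))`. -/
noncomputable def expTrunc (β : ℝ) (n : ℕ) (x : ℝ) : ℝ :=
  Real.exp (-β) *
    (besselI 0 β + 2 * ∑ j ∈ Finset.Icc 1 n, besselI j β * (Polynomial.Chebyshev.T ℝ (j : ℤ)).eval (-x))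

/-
Since `2x T_k = T_{k+1} + T_{k-1}`, a monomial `x ^ m` is a convex combination of the `T_k`.
A power series with absolutely summable coefficients on `[-1, 1]` can therefore be rearranged into
its Chebyshev series, and if its coefficients are nonnegative, so are its Chebyshev coefficients.
As `|T_k| ≤ 1 = T_k(1)`, the tail of a Chebyshev series with nonnegative coefficients is then
largest in absolute value at `1`. The theorem is the case of `e^{βy}` at `y = -x`, whose Chebyshev
coefficients are the `I_j(β)`.
-/

section ChebyshevSeries

open Polynomial.Chebyshev Real Set

/-- The `k`-th Chebyshev coefficient of `f` on `[-1, 1]`, normalized for the two-sided expansion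
`f = ∑_{k ∈ ℤ} c_k T_k`; the one-sided expansion is `c_0 + 2 ∑_{k ≥ 1} c_k T_k`. -/
noncomputable def chebyshevCoeff (f : ℝ → ℝ) (k : ℤ) : ℝ :=
  π⁻¹ * ∫ x, f x * (T ℝ k).eval x ∂measureT

/-- The degree-`n` truncation of the Chebyshev series of `f`. -/
noncomputable def chebyshevPartialSum (f : ℝ → ℝ) (n : ℕ) (x : ℝ) : ℝ :=
  chebyshevCoeff f 0 + 2 * ∑ j ∈ Finset.Icc 1 n, chebyshevCoeff f j * (T ℝ j).eval x

theorem chebyshevCoeff_neg (f : ℝ → ℝ) (k : ℤ) : chebyshevCoeff f (-k) = chebyshevCoeff f k := by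
  simp only [chebyshevCoeff, T_neg]

theorem chebyshevCoeff_one (k : ℤ) :
    chebyshevCoeff (fun _ ↦ 1) k = if k = 0 then 1 else 0 := by
  split_ifs with hk
  · subst hk
    simp only [chebyshevCoeff, one_mul, integral_eval_T_real_measureT_zero,
      inv_mul_cancel₀ pi_ne_zero]
  · simp only [chebyshevCoeff, one_mul, integral_eval_T_real_measureT_of_ne_zero hk, mul_zero]

theorem two_mul_mul_eval_T {R : Type*} [CommRing R] (x : R) (k : ℤ) :
    2 * x * (T R k).eval x = (T R (k + 1)).eval x + (T R (k - 1)).eval x := by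
  simp only [T_add_one, Polynomial.eval_sub, Polynomial.eval_mul, Polynomial.eval_ofNat,
    Polynomial.eval_X, sub_add_cancel]

theorem chebyshevCoeff_mul_id {f : ℝ → ℝ} (hf : ContinuousOn f (Icc (-1) 1)) (k : ℤ) :
    chebyshevCoeff (fun x ↦ f x * x) k =
      (chebyshevCoeff f (k + 1) + chebyshevCoeff f (k - 1)) / 2 := by
  have hint (l : ℤ) : Integrable (fun x ↦ f x * (T ℝ l).eval x) measureT :=
    integrable_measureT (hf.mul (T ℝ l).continuous.continuousOn)
  have hrec (x : ℝ) : f x * x * (T ℝ k).eval x =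
      (f x * (T ℝ (k + 1)).eval x + f x * (T ℝ (k - 1)).eval x) / 2 := by
    linear_combination f x / 2 * two_mul_mul_eval_T x k
  simp only [chebyshevCoeff, hrec, integral_div, integral_add (hint _) (hint _)]
  ring

theorem chebyshevCoeff_pow_succ (m : ℕ) (k : ℤ) :
    chebyshevCoeff (· ^ (m + 1)) k =
      (chebyshevCoeff (· ^ m) (k + 1) + chebyshevCoeff (· ^ m) (k - 1)) / 2 := by
  simpa only [pow_succ] using chebyshevCoeff_mul_id (continuous_pow m).continuousOn k

theorem chebyshevCoeff_pow_nonneg (m : ℕ) (k : ℤ) : 0 ≤ chebyshevCoeff (· ^ m) k := by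
  induction m generalizing k with
  | zero =>
    simp only [pow_zero, chebyshevCoeff_one]
    split_ifs <;> norm_num
  | succ m ih =>
    rw [chebyshevCoeff_pow_succ]
    linarith [ih (k + 1), ih (k - 1)]

-- The shift `l` lets the induction step use the two sums over `T_{k+1}` and `T_{k-1}` separately.
theorem hasSum_chebyshevCoeff_pow_mul_T_add (m : ℕ) (l : ℤ) (x : ℝ) :
    HasSum (fun k : ℤ ↦ chebyshevCoeff (· ^ m) k * (T ℝ (k + l)).eval x)
      (x ^ m * (T ℝ l).eval x) := by
  induction m generalizing l with
  | zero =>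
    simp only [pow_zero, chebyshevCoeff_one, ite_mul, one_mul, zero_mul]
    convert! hasSum_ite_eq (0 : ℤ) ((T ℝ l).eval x) using 3 with k
    simp_all
  | succ m ih =>
    have hup := (Equiv.addRight (1 : ℤ)).hasSum_iff.mpr (ih (l - 1))
    have hdown := (Equiv.subRight (1 : ℤ)).hasSum_iff.mpr (ih (l + 1))
    convert! (hup.add hdown).div_const 2 using 1
    · funext k
      simp only [chebyshevCoeff_pow_succ, Function.comp_apply, Equiv.coe_addRight,
        Equiv.subRight_apply, add_add_sub_cancel, sub_add_add_cancel]
      ring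
    · linear_combination x ^ m / 2 * two_mul_mul_eval_T x l

theorem hasSum_chebyshevCoeff_pow_mul_T (m : ℕ) (x : ℝ) :
    HasSum (fun k : ℤ ↦ chebyshevCoeff (· ^ m) k * (T ℝ k).eval x) (x ^ m) := by
  simpa using hasSum_chebyshevCoeff_pow_mul_T_add m 0 x

theorem hasSum_chebyshevCoeff_pow (m : ℕ) :
    HasSum (fun k : ℤ ↦ chebyshevCoeff (· ^ m) k) 1 := by
  simpa using hasSum_chebyshevCoeff_pow_mul_T m 1

section PowerSeries

variable {a : ℕ → ℝ} {f : ℝ → ℝ}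

theorem hasSum_mul_chebyshevCoeff_pow
    (hf : ∀ x ∈ Icc (-1 : ℝ) 1, HasSum (fun m ↦ a m * x ^ m) (f x)) (k : ℤ) :
    HasSum (fun m ↦ a m * chebyshevCoeff (· ^ m) k) (chebyshevCoeff f k) := by
  have ha : Summable fun m ↦ |a m| := by simpa using (hf 1 (by simp)).summable.abs
  have hbound (m : ℕ) (θ : ℝ) : ‖a m * cos θ ^ m * (T ℝ k).eval (cos θ)‖ ≤ |a m| := by
    rw [norm_mul, norm_mul, norm_pow, mul_assoc]
    exact mul_le_of_le_one_right (abs_nonneg _) <|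
      mul_le_one₀ (pow_le_one₀ (abs_nonneg _) (abs_cos_le_one θ)) (abs_nonneg _)
        (abs_eval_T_real_le_one k (abs_cos_le_one θ))
  have key : HasSum (fun m ↦ ∫ θ in 0..π, a m * cos θ ^ m * (T ℝ k).eval (cos θ))
      (∫ θ in 0..π, f (cos θ) * (T ℝ k).eval (cos θ)) :=
    intervalIntegral.hasSum_integral_of_dominated_convergence (fun m _ ↦ |a m|)
      (fun m ↦ Continuous.aestronglyMeasurable (by fun_prop))
      (fun m ↦ .of_forall fun θ _ ↦ hbound m θ)
      (.of_forall fun _ _ ↦ ha) intervalIntegrable_const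
      (.of_forall fun θ _ ↦ (hf _ (cos_mem_Icc θ)).mul_right _)
  simp only [chebyshevCoeff, integral_measureT_eq_integral_cos]
  convert! key.mul_left π⁻¹ using 2 with m
  simp only [mul_assoc, intervalIntegral.integral_const_mul]
  ring

theorem chebyshevCoeff_nonneg_of_hasSum (ha : ∀ m, 0 ≤ a m)
    (hf : ∀ x ∈ Icc (-1 : ℝ) 1, HasSum (fun m ↦ a m * x ^ m) (f x)) (k : ℤ) :
    0 ≤ chebyshevCoeff f k :=
  (hasSum_mul_chebyshevCoeff_pow hf k).nonneg fun m ↦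
    mul_nonneg (ha m) (chebyshevCoeff_pow_nonneg m k)

theorem summable_mul_chebyshevCoeff_pow_mul_T (ha : Summable fun m ↦ |a m|) {x : ℝ}
    (hx : |x| ≤ 1) :
    Summable fun p : ℕ × ℤ ↦ a p.1 * (chebyshevCoeff (· ^ p.1) p.2 * (T ℝ p.2).eval x) := by
  have hdom : Summable fun p : ℕ × ℤ ↦ |a p.1| * chebyshevCoeff (· ^ p.1) p.2 := by
    refine (summable_prod_of_nonneg fun p ↦
      mul_nonneg (abs_nonneg _) (chebyshevCoeff_pow_nonneg p.1 p.2)).mpr ⟨fun m ↦ ?_, ?_⟩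
    · exact (hasSum_chebyshevCoeff_pow m).summable.mul_left |a m|
    · simpa only [tsum_mul_left, (hasSum_chebyshevCoeff_pow _).tsum_eq, mul_one] using ha
  refine hdom.of_norm_bounded fun p ↦ ?_
  rw [norm_mul, norm_mul, norm_of_nonneg (chebyshevCoeff_pow_nonneg p.1 p.2)]
  exact mul_le_mul_of_nonneg_left (mul_le_of_le_one_right (chebyshevCoeff_pow_nonneg p.1 p.2)
    (abs_eval_T_real_le_one p.2 hx)) (abs_nonneg _)

theorem hasSum_chebyshevCoeff_mul_T
    (hf : ∀ x ∈ Icc (-1 : ℝ) 1, HasSum (fun m ↦ a m * x ^ m) (f x)) {x : ℝ}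
    (hx : x ∈ Icc (-1 : ℝ) 1) :
    HasSum (fun k : ℤ ↦ chebyshevCoeff f k * (T ℝ k).eval x) (f x) := by
  have ha : Summable fun m ↦ |a m| := by simpa using (hf 1 (by simp)).summable.abs
  obtain ⟨s, hs⟩ := summable_mul_chebyshevCoeff_pow_mul_T ha (abs_le.mpr hx)
  have hrow := hs.prod_fiberwise fun m ↦ (hasSum_chebyshevCoeff_pow_mul_T m x).mul_left (a m)
  have hcol := (Equiv.prodComm ℤ ℕ).hasSum_iff.mpr hs |>.prod_fiberwise fun k ↦ by
    simpa only [mul_assoc] using!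
      (hasSum_mul_chebyshevCoeff_pow hf k).mul_right ((T ℝ k).eval x)
  rwa [hrow.unique (hf x hx)] at hcol

end PowerSeries

section Truncation

variable {f : ℝ → ℝ} {x : ℝ}

theorem hasSum_sub_chebyshevPartialSum
    (hx : HasSum (fun k : ℤ ↦ chebyshevCoeff f k * (T ℝ k).eval x) (f x)) (n : ℕ) :
    HasSum (fun j : ℕ ↦ 2 * (chebyshevCoeff f ↑(n + 1 + j) * (T ℝ ↑(n + 1 + j)).eval x))
      (f x - chebyshevPartialSum f n x) := by
  have hfold : HasSum (fun j : ℕ ↦ 2 * (chebyshevCoeff f j * (T ℝ j).eval x))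
      (f x + chebyshevCoeff f 0) := by
    simpa [chebyshevCoeff_neg, ← two_mul] using hx.nat_add_neg
  convert! (hasSum_nat_add_iff' (n + 1)).mpr hfold using 1
  · simp only [add_comm]
  · rw [Finset.sum_range_eq_add_Ico _ n.succ_pos, ← Finset.mul_sum, Nat.succ_eq_add_one,
      Finset.Ico_add_one_right_eq_Icc, chebyshevPartialSum]
    simp only [Nat.cast_zero, T_zero, Polynomial.eval_one, mul_one]
    ring

theorem abs_chebyshevPartialSum_one_sub_eq_tsum {n : ℕ}
    (hc : ∀ j : ℕ, 0 ≤ chebyshevCoeff f ↑(n + 1 + j))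
    (h1 : HasSum (fun k : ℤ ↦ chebyshevCoeff f k * (T ℝ k).eval 1) (f 1)) :
    |chebyshevPartialSum f n 1 - f 1| = 2 * ∑' j : ℕ, chebyshevCoeff f ↑(n + 1 + j) := by
  have htail := (hasSum_sub_chebyshevPartialSum h1 n).tsum_eq
  simp only [T_eval_one, mul_one, tsum_mul_left] at htail
  rw [abs_sub_comm, ← htail, abs_of_nonneg (mul_nonneg zero_le_two (tsum_nonneg hc))]

theorem abs_chebyshevPartialSum_sub_le_tsum {n : ℕ}
    (hc : ∀ j : ℕ, 0 ≤ chebyshevCoeff f ↑(n + 1 + j))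
    (h1 : HasSum (fun k : ℤ ↦ chebyshevCoeff f k * (T ℝ k).eval 1) (f 1))
    (hx1 : |x| ≤ 1)
    (hx : HasSum (fun k : ℤ ↦ chebyshevCoeff f k * (T ℝ k).eval x) (f x)) :
    |chebyshevPartialSum f n x - f x| ≤ 2 * ∑' j : ℕ, chebyshevCoeff f ↑(n + 1 + j) := by
  have hsum : Summable fun j : ℕ ↦ 2 * chebyshevCoeff f ↑(n + 1 + j) := by
    simpa using (hasSum_sub_chebyshevPartialSum h1 n).summable
  rw [abs_sub_comm, ← (hasSum_sub_chebyshevPartialSum hx n).tsum_eq, ← tsum_mul_left,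
    ← norm_eq_abs]
  refine tsum_of_norm_bounded hsum.hasSum fun j ↦ ?_
  rw [norm_mul, norm_mul, norm_two, norm_of_nonneg (hc j)]
  exact mul_le_mul_of_nonneg_left
    (mul_le_of_le_one_right (hc j) (abs_eval_T_real_le_one _ hx1)) zero_le_two

end Truncation

theorem hasSum_exp_const_mul (β x : ℝ) :
    HasSum (fun m : ℕ ↦ β ^ m / m.factorial * x ^ m) (exp (β * x)) := by
  simpa only [exp_eq_exp_ℝ, mul_pow, mul_div_right_comm] using
    NormedSpace.expSeries_div_hasSum_exp (β * x)

theorem besselI_eq_chebyshevCoeff (j : ℕ) (β : ℝ) :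
    besselI j β = chebyshevCoeff (fun x ↦ exp (β * x)) j := by
  simp [besselI, chebyshevCoeff, integral_measureT_eq_integral_cos]

theorem expTrunc_eq_chebyshevPartialSum (β : ℝ) (n : ℕ) (x : ℝ) :
    expTrunc β n x = exp (-β) * chebyshevPartialSum (fun y ↦ exp (β * y)) n (-x) := by
  simp only [expTrunc, chebyshevPartialSum, besselI_eq_chebyshevCoeff, Nat.cast_zero]

theorem abs_expTrunc_sub (β : ℝ) (n : ℕ) (x : ℝ) :
    |expTrunc β n x - exp (-β * (x + 1))| =
      exp (-β) * |chebyshevPartialSum (fun y ↦ exp (β * y)) n (-x) - exp (β * -x)| := by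
  rw [expTrunc_eq_chebyshevPartialSum, show -β * (x + 1) = -β + β * -x by ring, exp_add,
    ← mul_sub, abs_mul, abs_exp]

end ChebyshevSeries

/-- The Chebyshev truncation error of `e^{−β(x+1)}` on `[−1,1]` equals
`2 e^{−β} Σ_{j=n+1}^∞ I_j(β)`, and is attained at `x = −1`. -/
theorem expTrunc_error (β : ℝ) (hβ : 0 < β) (n : ℕ) :
    (∀ x ∈ Set.Icc (-1 : ℝ) 1,
        |expTrunc β n x - Real.exp (-β * (x + 1))| ≤
          2 * Real.exp (-β) * ∑' j : ℕ, besselI (n + 1 + j) β) ∧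
      |expTrunc β n (-1) - Real.exp (-β * (-1 + 1))| =
        2 * Real.exp (-β) * ∑' j : ℕ, besselI (n + 1 + j) β := by
  have hexp : ∀ y ∈ Set.Icc (-1 : ℝ) 1,
      HasSum (fun m : ℕ ↦ β ^ m / m.factorial * y ^ m) (Real.exp (β * y)) :=
    fun y _ ↦ hasSum_exp_const_mul β y
  have hcoeff (k : ℤ) : 0 ≤ chebyshevCoeff (fun y ↦ Real.exp (β * y)) k :=
    chebyshevCoeff_nonneg_of_hasSum (fun m ↦ by positivity) hexp k
  have hone := hasSum_chebyshevCoeff_mul_T hexp (x := 1) (by simp)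
  simp only [abs_expTrunc_sub, besselI_eq_chebyshevCoeff, mul_comm (2 : ℝ) (Real.exp (-β)),
    mul_assoc]
  refine ⟨fun x hx ↦ ?_, ?_⟩
  · have hx' : -x ∈ Set.Icc (-1 : ℝ) 1 := by simpa [and_comm, neg_le] using hx
    gcongr
    exact abs_chebyshevPartialSum_sub_le_tsum (fun j ↦ hcoeff _) hone (abs_le.mpr hx')
      (hasSum_chebyshevCoeff_mul_T hexp hx')
  · rw [neg_neg, abs_chebyshevPartialSum_one_sub_eq_tsum (fun j ↦ hcoeff _) hone]
end

section
/- For every β > 0 and ε ∈ (0, 1/2], with n = ⌈√(2·⌈max(βe², log(2/ε))⌉·log(4/ε))⌉, one has 2 e^{−β} Σ_{j=n+1}^∞ I_j(β) ≤ ε; consequently the degree-n Chebyshev truncation of e^{−β(x+1)} approximates it uniformly on [−1,1] with error at most ε. -/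
open MeasureTheory

/-!
Multiplying the exponential series of `(β/2) e^{iθ}` and `(β/2) e^{-iθ}` gives
`e^{β cos θ} = ∑_{k,l} (β/2)^k/k! · (β/2)^l/l! · T_{|k-l|}(cos θ)`, so the Chebyshev coefficients
of `x ↦ e^{βx}` are nonnegative and, by orthogonality, equal to `I_0(β), 2I_1(β), 2I_2(β), …`.
After division by `e^β` they are the distribution of `|X - Y|` for independent Poisson variables
`X, Y` of mean `β/2`, and evaluating the expansion at `x = cosh t`, where `T_j(x) = cosh(jt)`,
gives the exponential moment `𝔼 cosh(t|X - Y|)`. Markov's inequality then bounds the tail beyond `n`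
by `2 exp(β(cosh t - 1) - nt)`. For `0 ≤ t ≤ 2` one has `cosh t - 1 ≤ e²t²/2`, so if `βe² ≤ m` and
`mt ≤ n` this is at most `2 exp(-mt²/2)`, which equals `ε` when `t = √(2 log(2/ε)/m)`. The tail
bounds the truncation error because `|T_j| ≤ 1` on `[-1, 1]`.
-/

open Real Polynomial.Chebyshev
open scoped Nat

section ChebyshevSeries

variable {b : ℕ → ℝ}

theorem integral_mul_eval_T_measureT_of_hasSum {f : ℝ → ℝ}
    (hf : ∀ x, |x| ≤ 1 → HasSum (fun i : ℕ ↦ b i * (T ℝ i).eval x) (f x)) (j : ℕ) :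
    ∫ x, f x * (T ℝ j).eval x ∂measureT =
      b j * ∫ x, (T ℝ j).eval x * (T ℝ j).eval x ∂measureT := by
  have hb : Summable b := by simpa using (hf 1 (by simp)).summable
  have mem_Icc : ∀ᵐ x ∂measureT, |x| ≤ 1 :=
    (ae_restrict_mem measurableSet_Ioc).mono fun x hx ↦ abs_le.2 ⟨hx.1.le, hx.2⟩
  have termwise : HasSum
      (fun i : ℕ ↦ ∫ x, b i * (T ℝ i).eval x * (T ℝ j).eval x ∂measureT)
      (∫ x, f x * (T ℝ j).eval x ∂measureT) := by
    refine hasSum_integral_of_dominated_convergence (fun i _ ↦ |b i|)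
      (fun i ↦ Continuous.aestronglyMeasurable (by fun_prop)) (fun i ↦ ?_)
      (.of_forall fun _ ↦ hb.abs) (integrable_measureT continuousOn_const)
      (mem_Icc.mono fun x hx ↦ (hf x hx).mul_right _)
    filter_upwards [mem_Icc] with x hx
    rw [norm_eq_abs, abs_mul, abs_mul, mul_assoc]
    exact mul_le_of_le_one_right (abs_nonneg _) <| mul_le_one₀ (abs_eval_T_real_le_one _ hx)
      (abs_nonneg _) (abs_eval_T_real_le_one _ hx)
  simp_rw [mul_assoc, integral_const_mul] at termwise
  refine termwise.unique (hasSum_single j fun i hij ↦ ?_)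
  rw [integral_eval_T_real_mul_eval_T_real_measureT_of_ne hij, mul_zero]

theorem abs_sum_range_mul_eval_T_sub_le_tsum {x a : ℝ} (hb₀ : ∀ j, 0 ≤ b j) (hb : Summable b)
    (hx : |x| ≤ 1) (ha : HasSum (fun j : ℕ ↦ b j * (T ℝ j).eval x) a) (n : ℕ) :
    |∑ j ∈ Finset.range n, b j * (T ℝ j).eval x - a| ≤ ∑' j, b (n + j) := by
  refine dist_le_tsum_of_dist_le_of_tendsto b (fun j ↦ ?_) hb ha.tendsto_sum_nat n
  rw [Finset.sum_range_succ, dist_self_add_right, norm_eq_abs, abs_mul, abs_of_nonneg (hb₀ j)]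
  exact mul_le_of_le_one_right (hb₀ j) (abs_eval_T_real_le_one _ hx)

theorem tsum_nat_add_le_div_of_monotone {g : ℕ → ℝ} {M : ℝ} (hb : ∀ j, 0 ≤ b j)
    (hg₀ : ∀ j, 0 < g j) (hg : Monotone g) (hM : HasSum (fun j ↦ b j * g j) M) (n : ℕ) :
    ∑' j, b (n + j) ≤ M / g n := by
  refine Real.tsum_le_of_sum_range_le (fun j ↦ hb _) fun k ↦ ?_
  rw [le_div_iff₀ (hg₀ n), Finset.sum_mul]
  calc ∑ j ∈ Finset.range k, b (n + j) * g n
      ≤ ∑ j ∈ Finset.range k, b (n + j) * g (n + j) := by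
        gcongr with j
        exacts [hb _, hg (Nat.le_add_right n j)]
    _ ≤ ∑ j ∈ Finset.range (n + k), b j * g j := by
        rw [Finset.sum_range_add]
        exact le_add_of_nonneg_left <| Finset.sum_nonneg fun j _ ↦ mul_nonneg (hb j) (hg₀ j).le
    _ ≤ M := sum_le_hasSum _ (fun j _ ↦ mul_nonneg (hb j) (hg₀ j).le) hM

end ChebyshevSeries

section ExpChebyshevCoeff

/-- `e^β` times the probability that two independent Poisson variables of mean `β/2` take the
values `p.1` and `p.2`. -/
noncomputable def poissonPairWeight (β : ℝ) (p : ℕ × ℕ) : ℝ :=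
  (β / 2) ^ p.1 / p.1 ! * ((β / 2) ^ p.2 / p.2 !)

theorem poissonPairWeight_nonneg {β : ℝ} (hβ : 0 ≤ β) (p : ℕ × ℕ) : 0 ≤ poissonPairWeight β p := by
  unfold poissonPairWeight
  positivity

theorem hasSum_poissonPairWeight_mul_exp (β : ℝ) (s : ℂ) :
    HasSum (fun p : ℕ × ℕ ↦ (poissonPairWeight β p : ℂ) * Complex.exp ((p.1 - p.2) * s))
      (Complex.exp (β * Complex.cosh s)) := by
  have exp_series (z : ℂ) : HasSum (fun k : ℕ ↦ z ^ k / k !) (Complex.exp z) := by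
    simpa only [Complex.exp_eq_exp_ℂ] using NormedSpace.expSeries_div_hasSum_exp z
  have hs := exp_series (β / 2 * Complex.exp s)
  have hs_neg := exp_series (β / 2 * Complex.exp (-s))
  have summable_product := summable_mul_of_summable_norm hs.summable.norm hs_neg.summable.norm
  have product := hs.mul hs_neg summable_product
  rw [← Complex.exp_add, ← mul_add,
    show (β / 2 : ℂ) * (Complex.exp s + Complex.exp (-s)) = β * Complex.cosh s by
      rw [Complex.cosh]; ring] at product
  refine product.congr_fun fun p ↦ ?_
  rw [mul_pow, mul_pow, ← Complex.exp_nat_mul, ← Complex.exp_nat_mul,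
    show ((p.1 : ℂ) - p.2) * s = p.1 * s + p.2 * -s by ring, Complex.exp_add, poissonPairWeight]
  push_cast
  ring

theorem hasSum_poissonPairWeight_mul_eval_T (β x : ℝ) :
    HasSum (fun p : ℕ × ℕ ↦ poissonPairWeight β p * (T ℝ (p.1 - p.2)).eval x) (exp (β * x)) := by
  obtain ⟨θ, hθ⟩ := Complex.cos_surjective x
  have hcosh : Complex.cosh (θ * Complex.I) = x := by rw [Complex.cosh_mul_I, hθ]
  have average := ((hasSum_poissonPairWeight_mul_exp β (θ * Complex.I)).add
    (hasSum_poissonPairWeight_mul_exp β (-(θ * Complex.I)))).div_const 2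
  rw [Complex.cosh_neg, hcosh, add_self_div_two] at average
  rw [← Complex.hasSum_ofReal]
  push_cast
  refine average.congr_fun fun p ↦ ?_
  rw [← hcosh, T_complex_cosh, Complex.cosh]
  push_cast
  ring_nf

/-- The `j`-th coefficient of the Chebyshev expansion of `x ↦ e^{βx}`, as a sum over the pairs
`(k, l)` with `|k - l| = j`. -/
noncomputable def expChebyshevCoeff (β : ℝ) (j : ℕ) : ℝ :=
  ∑' p : (fun p : ℕ × ℕ ↦ (p.1 - p.2 : ℤ).natAbs) ⁻¹' {j}, poissonPairWeight β p

theorem expChebyshevCoeff_nonneg {β : ℝ} (hβ : 0 ≤ β) (j : ℕ) : 0 ≤ expChebyshevCoeff β j :=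
  tsum_nonneg fun p ↦ poissonPairWeight_nonneg hβ p

theorem hasSum_expChebyshevCoeff_mul_eval_T (β x : ℝ) :
    HasSum (fun j : ℕ ↦ expChebyshevCoeff β j * (T ℝ j).eval x) (exp (β * x)) := by
  refine ((hasSum_poissonPairWeight_mul_eval_T β x).tsum_fiberwise
    fun p : ℕ × ℕ ↦ (p.1 - p.2 : ℤ).natAbs).congr_fun fun j ↦ ?_
  rw [expChebyshevCoeff, ← tsum_mul_right]
  refine tsum_congr ?_
  rintro ⟨p, rfl⟩
  rw [T_natAbs]

theorem summable_expChebyshevCoeff (β : ℝ) : Summable (expChebyshevCoeff β) := by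
  simpa using (hasSum_expChebyshevCoeff_mul_eval_T β 1).summable

theorem besselI_eq_expChebyshevCoeff_mul_integral (j : ℕ) (β : ℝ) :
    besselI j β =
      1 / π * (expChebyshevCoeff β j * ∫ x, (T ℝ j).eval x * (T ℝ j).eval x ∂measureT) := by
  rw [← integral_mul_eval_T_measureT_of_hasSum
    (fun x _ ↦ hasSum_expChebyshevCoeff_mul_eval_T β x), integral_measureT_eq_integral_cos]
  simp only [besselI, T_real_cos, Int.cast_natCast]

theorem expChebyshevCoeff_zero (β : ℝ) : expChebyshevCoeff β 0 = besselI 0 β := by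
  rw [besselI_eq_expChebyshevCoeff_mul_integral, Nat.cast_zero,
    integral_eval_T_real_mul_self_measureT_zero]
  field_simp

theorem expChebyshevCoeff_of_ne_zero (β : ℝ) {j : ℕ} (hj : j ≠ 0) :
    expChebyshevCoeff β j = 2 * besselI j β := by
  rw [besselI_eq_expChebyshevCoeff_mul_integral, integral_T_real_mul_self_measureT_of_ne_zero hj]
  field_simp

theorem expTrunc_eq_sum_range (β : ℝ) (n : ℕ) (x : ℝ) :
    expTrunc β n x =
      exp (-β) * ∑ j ∈ Finset.range (n + 1), expChebyshevCoeff β j * (T ℝ j).eval (-x) := by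
  rw [expTrunc, Nat.range_succ_eq_Icc_zero, ← Finset.add_sum_Ioc_eq_sum_Icc n.zero_le,
    Finset.mul_sum, expChebyshevCoeff_zero, Nat.cast_zero, T_zero, Polynomial.eval_one, mul_one]
  congr 2
  refine Finset.sum_congr rfl fun j hj ↦ ?_
  rw [expChebyshevCoeff_of_ne_zero β (Finset.mem_Ioc.1 hj).1.ne', mul_assoc]

theorem abs_expTrunc_sub_exp_le_tsum {β x : ℝ} (hβ : 0 ≤ β) (hx : |x| ≤ 1) (n : ℕ) :
    |expTrunc β n x - exp (-β * (x + 1))| ≤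
      exp (-β) * ∑' j, expChebyshevCoeff β (n + 1 + j) := by
  rw [expTrunc_eq_sum_range, show -β * (x + 1) = -β + β * -x by ring, exp_add, ← mul_sub, abs_mul,
    abs_exp]
  gcongr
  exact abs_sum_range_mul_eval_T_sub_le_tsum (expChebyshevCoeff_nonneg hβ)
    (summable_expChebyshevCoeff β) (by rwa [abs_neg]) (hasSum_expChebyshevCoeff_mul_eval_T β (-x)) _

end ExpChebyshevCoeff

section TailBound

theorem tsum_expChebyshevCoeff_nat_add_le {β : ℝ} (hβ : 0 ≤ β) (t : ℝ) (n : ℕ) :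
    ∑' j, expChebyshevCoeff β (n + j) ≤ exp (β * cosh t) / cosh (n * t) := by
  refine tsum_nat_add_le_div_of_monotone (g := fun j ↦ cosh (j * t))
    (expChebyshevCoeff_nonneg hβ) (fun j ↦ cosh_pos _) (fun i j hij ↦ ?_) ?_ n
  · rw [cosh_le_cosh, abs_mul, abs_mul, Nat.abs_cast, Nat.abs_cast]
    gcongr
  · simpa only [T_real_cosh, Int.cast_natCast] using
      hasSum_expChebyshevCoeff_mul_eval_T β (cosh t)

theorem inv_cosh_le_two_mul_exp_neg (x : ℝ) : (cosh x)⁻¹ ≤ 2 * exp (-x) := by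
  rw [exp_neg, ← div_eq_mul_inv, inv_le_comm₀ (cosh_pos x) (by positivity), inv_div, cosh_eq]
  gcongr
  exact le_add_of_nonneg_right (exp_pos _).le

theorem cosh_sub_one_le_half_sq_mul_exp (t : ℝ) : cosh t - 1 ≤ t ^ 2 / 2 * exp (t ^ 2 / 2) := by
  have h : (1 - t ^ 2 / 2) * exp (t ^ 2 / 2) ≤ 1 := by
    rw [← le_div_iff₀ (exp_pos _), one_div, ← exp_neg]
    exact one_sub_le_exp_neg _
  linarith [cosh_le_exp_half_sq t]

theorem mul_cosh_sub_one_le {β m t : ℝ} (hβ : 0 ≤ β) (hm : β * exp 1 ^ 2 ≤ m) (ht : |t| ≤ 2) :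
    β * (cosh t - 1) ≤ m * t ^ 2 / 2 := by
  have hexp : exp (t ^ 2 / 2) ≤ exp 1 ^ 2 := by
    rw [← exp_nat_mul, exp_le_exp]
    push_cast
    linarith [sq_le_sq' (abs_le.1 ht).1 (abs_le.1 ht).2]
  calc β * (cosh t - 1) ≤ β * (t ^ 2 / 2 * exp 1 ^ 2) := by
        gcongr
        exact (cosh_sub_one_le_half_sq_mul_exp t).trans (by gcongr)
    _ = β * exp 1 ^ 2 * t ^ 2 / 2 := by ring
    _ ≤ m * t ^ 2 / 2 := by gcongr

theorem exp_neg_mul_tsum_expChebyshevCoeff_le_of_mul_le {β m t : ℝ} {n : ℕ} (hβ : 0 ≤ β)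
    (hm : β * exp 1 ^ 2 ≤ m) (ht₀ : 0 ≤ t) (ht : t ≤ 2) (hn : m * t ≤ n) :
    exp (-β) * ∑' j, expChebyshevCoeff β (n + j) ≤ 2 * exp (-(m * t ^ 2 / 2)) := by
  have hcosh : β * (cosh t - 1) ≤ m * t ^ 2 / 2 :=
    mul_cosh_sub_one_le hβ hm (by rwa [abs_of_nonneg ht₀])
  have hnt : m * t * t ≤ n * t := by gcongr
  calc exp (-β) * ∑' j, expChebyshevCoeff β (n + j)
      ≤ exp (-β) * (exp (β * cosh t) / cosh (n * t)) := by
        gcongr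
        exact tsum_expChebyshevCoeff_nat_add_le hβ t n
    _ ≤ exp (-β) * (exp (β * cosh t) * (2 * exp (-(n * t)))) := by
        rw [div_eq_mul_inv]
        gcongr
        exact inv_cosh_le_two_mul_exp_neg _
    _ = 2 * exp (β * (cosh t - 1) - n * t) := by
        rw [mul_left_comm _ 2, mul_left_comm _ 2, ← exp_add, ← exp_add]
        ring_nf
    _ ≤ 2 * exp (-(m * t ^ 2 / 2)) := by
        gcongr
        linarith

theorem exp_neg_mul_tsum_expChebyshevCoeff_le {β ε m : ℝ} {n : ℕ} (hβ : 0 < β) (hε₀ : 0 < ε)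
    (hε : ε ≤ 2) (hβm : β * exp 1 ^ 2 ≤ m) (hεm : log (2 / ε) ≤ 2 * m)
    (hn : √(2 * m * log (2 / ε)) ≤ n) :
    exp (-β) * ∑' j, expChebyshevCoeff β (n + j) ≤ ε := by
  have hm : 0 < m := lt_of_lt_of_le (by positivity) hβm
  have hlog : 0 ≤ log (2 / ε) := log_nonneg ((one_le_div hε₀).2 hε)
  have ht : √(2 * log (2 / ε) / m) ≤ 2 := by
    rw [sqrt_le_left zero_le_two, div_le_iff₀ hm]
    linarith
  have hmt : m * √(2 * log (2 / ε) / m) = √(2 * m * log (2 / ε)) := by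
    nth_rw 1 [← sqrt_sq hm.le]
    rw [← sqrt_mul (sq_nonneg m)]
    congr 1
    field_simp
  have hmt_sq : m * √(2 * log (2 / ε) / m) ^ 2 / 2 = log (2 / ε) := by
    rw [sq_sqrt (by positivity)]
    field_simp
  calc exp (-β) * ∑' j, expChebyshevCoeff β (n + j)
      ≤ 2 * exp (-(m * √(2 * log (2 / ε) / m) ^ 2 / 2)) :=
        exp_neg_mul_tsum_expChebyshevCoeff_le_of_mul_le hβ.le hβm (sqrt_nonneg _) ht
          (hmt.trans_le hn)
    _ = ε := by
        rw [hmt_sq, exp_neg, exp_log (by positivity)]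
        field_simp

end TailBound

theorem expTrunc_error_le_general {β ε m : ℝ} {n : ℕ} (hβ : 0 < β) (hε₀ : 0 < ε) (hε : ε ≤ 2)
    (hβm : β * exp 1 ^ 2 ≤ m) (hεm : log (2 / ε) ≤ 2 * m) (hn : √(2 * m * log (2 / ε)) ≤ n) :
    2 * exp (-β) * ∑' j : ℕ, besselI (n + 1 + j) β ≤ ε ∧
      ∀ x ∈ Set.Icc (-1 : ℝ) 1, |expTrunc β n x - exp (-β * (x + 1))| ≤ ε := by
  have tail : exp (-β) * ∑' j, expChebyshevCoeff β (n + 1 + j) ≤ ε :=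
    exp_neg_mul_tsum_expChebyshevCoeff_le hβ hε₀ hε hβm hεm (hn.trans (by simp))
  refine ⟨?_, fun x hx ↦ (abs_expTrunc_sub_exp_le_tsum hβ.le (abs_le.2 hx) n).trans tail⟩
  rwa [mul_comm 2, mul_assoc, ← tsum_mul_left,
    ← tsum_congr fun j ↦ expChebyshevCoeff_of_ne_zero β (by omega : n + 1 + j ≠ 0)]

/-- For `β > 0`, `ε ∈ (0,1/2]` and `n = ⌈√(2⌈max(βe², log(2/ε))⌉ log(4/ε))⌉`, the Chebyshev
tail satisfies `2 e^{−β} Σ_{j=n+1}^∞ I_j(β) ≤ ε`, so the degree-`n` Chebyshev truncation of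
`e^{−β(x+1)}` approximates it uniformly on `[−1,1]` with error at most `ε`. -/
theorem expTrunc_error_le (β ε : ℝ) (hβ : 0 < β) (hε0 : 0 < ε) (hε : ε ≤ 1/2) (n : ℕ)
    (hn : n = ⌈Real.sqrt (2 * (⌈max (β * Real.exp 1 ^ 2) (Real.log (2 / ε))⌉₊ : ℝ) *
        Real.log (4 / ε))⌉₊) :
    2 * Real.exp (-β) * ∑' j : ℕ, besselI (n + 1 + j) β ≤ ε ∧
      ∀ x ∈ Set.Icc (-1 : ℝ) 1, |expTrunc β n x - Real.exp (-β * (x + 1))| ≤ ε := by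
  set m := ⌈max (β * exp 1 ^ 2) (log (2 / ε))⌉₊
  obtain ⟨hβm, hεm⟩ : β * exp 1 ^ 2 ≤ m ∧ log (2 / ε) ≤ m := max_le_iff.1 (Nat.le_ceil _)
  have hsqrt : √(2 * m * log (2 / ε)) ≤ √(2 * m * log (4 / ε)) := by gcongr; norm_num
  exact expTrunc_error_le_general hβ hε0 (by linarith) hβm (by linarith [m.cast_nonneg (α := ℝ)])
    (hsqrt.trans (hn ▸ Nat.le_ceil _))
end
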